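/- Let M ≥ 2 be an integer and p_0, …, p_{M−1} ∈ (0,1), n > 0, T > 0. For each θ > 0 let χ*(θ) be the unique positive real root of f_θ(χ) = χ^M − (1−p_0) e^{−θn} χ^{M−1} − Σ_{m=1}^{M−2} (1−p_m) e^{−θn} (∏_{j=0}^{m−1} p_j) χ^{M−1−m} − e^{−θn} ∏_{j=0}^{M−1} p_j. Then the effective capacity ρ_S(θ) = −(1/(θT)) log χ*(θ) satisfies lim_{θ→∞} ρ_S(θ) = n/(TM). -/

import Mathlib

open Finset Real Filter

/-!
The root equation is `χ ^ M = ε * q(χ)`, where `ε = exp (-θ * n)` tends to `0` and `q` is a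
polynomial of degree less than `M` with constant term `∏ j < M, p j`. Away from `0` the quotient
`q(χ) / χ ^ M` is bounded, so `χ` tends to `0` with `ε`, and `q(χ)` tends to `∏ j < M, p j ≠ 0`.
Taking logarithms, `M * log χ = -θ * n + O(1)`.
-/

section PowEqMulEval

open Polynomial

variable {𝕜 : Type*} [NormedDivisionRing 𝕜] {q : 𝕜[X]} {M : ℕ}

lemma exists_norm_eval_le_mul_norm_pow (hq : q.natDegree ≤ M) {δ : ℝ} (hδ : 0 < δ) :
    ∃ K, ∀ x : 𝕜, δ ≤ ‖x‖ → ‖q.eval x‖ ≤ K * ‖x‖ ^ M := by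
  refine ⟨∑ i ∈ range (q.natDegree + 1), ‖q.coeff i‖ / δ ^ (M - i), fun x hx ↦ ?_⟩
  have norm_pow_le : ∀ i ≤ M, ‖x‖ ^ i ≤ ‖x‖ ^ M / δ ^ (M - i) := fun i hi ↦ by
    rw [le_div_iff₀ (by positivity)]
    calc ‖x‖ ^ i * δ ^ (M - i) ≤ ‖x‖ ^ i * ‖x‖ ^ (M - i) := by gcongr
      _ = ‖x‖ ^ M := pow_mul_pow_sub _ hi
  calc ‖q.eval x‖ ≤ ∑ i ∈ range (q.natDegree + 1), ‖q.coeff i * x ^ i‖ := by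
        rw [eval_eq_sum_range]
        exact norm_sum_le _ _
    _ = ∑ i ∈ range (q.natDegree + 1), ‖q.coeff i‖ * ‖x‖ ^ i := by simp only [norm_mul, norm_pow]
    _ ≤ ∑ i ∈ range (q.natDegree + 1), ‖q.coeff i‖ * (‖x‖ ^ M / δ ^ (M - i)) := by
        gcongr with i hi
        exact norm_pow_le i ((mem_range_succ_iff.mp hi).trans hq)
    _ = (∑ i ∈ range (q.natDegree + 1), ‖q.coeff i‖ / δ ^ (M - i)) * ‖x‖ ^ M := by
        rw [sum_mul]
        exact sum_congr rfl fun i _ ↦ by ring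

variable {ι : Type*} {l : Filter ι} {ε x : ι → 𝕜}

lemma tendsto_zero_of_pow_eq_mul_eval (hq : q.natDegree ≤ M) (hε : Tendsto ε l (nhds 0))
    (hx : ∀ᶠ i in l, x i ^ M = ε i * q.eval (x i)) : Tendsto x l (nhds 0) := by
  refine NormedAddGroup.tendsto_nhds_zero.mpr fun δ hδ ↦ ?_
  obtain ⟨K, hK⟩ := exists_norm_eval_le_mul_norm_pow hq hδ
  have hεK : ∀ᶠ i in l, ‖ε i‖ * K < 1 := by
    have : Tendsto (fun i ↦ ‖ε i‖ * K) l (nhds 0) := by simpa using hε.norm.mul_const K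
    exact this.eventually_lt_const one_pos
  filter_upwards [hx, hεK] with i hi hiK
  by_contra! hδi
  have norm_pow_pos : 0 < ‖x i‖ ^ M := pow_pos (hδ.trans_le hδi) M
  have : ‖x i‖ ^ M < ‖x i‖ ^ M := calc
    ‖x i‖ ^ M = ‖ε i‖ * ‖q.eval (x i)‖ := by rw [← norm_pow, hi, norm_mul]
    _ ≤ ‖ε i‖ * (K * ‖x i‖ ^ M) := by gcongr; exact hK _ hδi
    _ = ‖ε i‖ * K * ‖x i‖ ^ M := (mul_assoc _ _ _).symm
    _ < ‖x i‖ ^ M := mul_lt_of_lt_one_left norm_pow_pos hiK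
  exact this.false

lemma tendsto_log_norm_div_log_norm_of_pow_eq_mul_eval (hM : M ≠ 0) (hq : q.natDegree ≤ M)
    (hq0 : q.coeff 0 ≠ 0) (hε : Tendsto ε l (nhdsWithin 0 {0}ᶜ))
    (hx : ∀ᶠ i in l, x i ^ M = ε i * q.eval (x i)) :
    Tendsto (fun i ↦ log ‖x i‖ / log ‖ε i‖) l (nhds (1 / M)) := by
  have hε0 : ∀ᶠ i in l, ε i ≠ 0 := hε.eventually self_mem_nhdsWithin
  have hlogε : Tendsto (fun i ↦ log ‖ε i‖) l atBot :=
    tendsto_log_nhdsGT_zero.comp (tendsto_norm_nhdsNE_zero.comp hε)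
  have hqx : Tendsto (fun i ↦ q.eval (x i)) l (nhds (q.coeff 0)) := by
    rw [coeff_zero_eq_eval_zero]
    exact (q.continuous.tendsto 0).comp
      (tendsto_zero_of_pow_eq_mul_eval hq (tendsto_nhds_of_tendsto_nhdsWithin hε) hx)
  have hratio : Tendsto (fun i ↦ log ‖q.eval (x i)‖ / log ‖ε i‖) l (nhds 0) :=
    (hqx.norm.log (norm_ne_zero_iff.mpr hq0)).div_atBot hlogε
  have hlim : Tendsto (fun i ↦ (1 + log ‖q.eval (x i)‖ / log ‖ε i‖) / M) l (nhds (1 / M)) := by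
    simpa using (hratio.const_add 1).div_const (M : ℝ)
  refine hlim.congr' ?_
  filter_upwards [hx, hε0, hqx.eventually_ne hq0, hlogε.eventually_ne_atBot 0]
    with i hi hεi hqi hlogi
  have hlog : M * log ‖x i‖ = log ‖ε i‖ + log ‖q.eval (x i)‖ := by
    rw [← log_pow, ← norm_pow, hi, norm_mul,
      log_mul (norm_ne_zero_iff.mpr hεi) (norm_ne_zero_iff.mpr hqi)]
  field_simp
  linarith

end PowEqMulEval

section HarqPolynomial

open Polynomial

variable {R : Type*} [CommRing R]

/-- The polynomial `q` for which the characteristic equation `f_θ(χ) = 0` of the HARQ system with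
deadline `M` and decoding-failure probabilities `p` reads `χ ^ M = exp (-θ * n) * q(χ)`. The leading
term `(1 - p 0) * χ ^ (M - 1)` is the summand `m = 0`. -/
noncomputable def harqPolynomial (p : ℕ → R) (M : ℕ) : R[X] :=
  ∑ m ∈ range (M - 1), C ((1 - p m) * ∏ j ∈ range m, p j) * X ^ (M - 1 - m) +
    C (∏ j ∈ range M, p j)

lemma natDegree_harqPolynomial_le (p : ℕ → R) (M : ℕ) : (harqPolynomial p M).natDegree ≤ M - 1 :=
  natDegree_add_le_of_degree_le
    (natDegree_sum_le_of_forall_le _ _ fun m _ ↦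
      (natDegree_C_mul_X_pow_le _ _).trans (Nat.sub_le _ m))
    ((natDegree_C _).trans_le (Nat.zero_le _))

lemma coeff_zero_harqPolynomial (p : ℕ → R) (M : ℕ) :
    (harqPolynomial p M).coeff 0 = ∏ j ∈ range M, p j := by
  have hsum : ∑ m ∈ range (M - 1),
      (C ((1 - p m) * ∏ j ∈ range m, p j) * X ^ (M - 1 - m)).coeff 0 = 0 :=
    sum_eq_zero fun m hm ↦ by
      rw [coeff_C_mul_X_pow, if_neg (Nat.sub_pos_of_lt (mem_range.mp hm)).ne]
  rw [harqPolynomial, coeff_add, finsetSum_coeff, hsum, coeff_C_zero, zero_add]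

lemma eval_harqPolynomial {M : ℕ} (hM : 2 ≤ M) (p : ℕ → R) (χ : R) :
    (harqPolynomial p M).eval χ = (1 - p 0) * χ ^ (M - 1) +
      ∑ m ∈ Icc 1 (M - 2), (1 - p m) * (∏ j ∈ range m, p j) * χ ^ (M - 1 - m) +
      ∏ j ∈ range M, p j := by
  have hrange : range (M - 1) = insert 0 (Icc 1 (M - 2)) := by
    ext m
    simp only [mem_range, mem_insert, mem_Icc]
    omega
  rw [harqPolynomial, hrange, sum_insert (by simp)]
  simp [eval_finsetSum, eval_prod]

end HarqPolynomial

theorem stmt16_general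
    (M : ℕ) (hM : 2 ≤ M) (p : ℕ → ℝ) (hp : ∏ j ∈ range M, p j ≠ 0)
    (n T : ℝ) (hn : 0 < n) (hT : T ≠ 0)
    (f : ℝ → ℝ → ℝ)
    (hf : ∀ θ χ : ℝ,
      f θ χ = χ ^ M - (1 - p 0) * exp (-θ * n) * χ ^ (M - 1) -
        (∑ m ∈ Icc 1 (M - 2),
          (1 - p m) * exp (-θ * n) * (∏ j ∈ range m, p j) * χ ^ (M - 1 - m)) -
        exp (-θ * n) * ∏ j ∈ range M, p j)
    (χstar : ℝ → ℝ)
    (hχstar : ∀ᶠ θ in atTop, 0 < χstar θ ∧ f θ (χstar θ) = 0) :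
    Tendsto (fun θ : ℝ ↦ -(1 / (θ * T)) * log (χstar θ)) atTop (nhds (n / (T * M))) := by
  have hfq : ∀ θ χ, f θ χ = χ ^ M - exp (-θ * n) * (harqPolynomial p M).eval χ := fun θ χ ↦ by
    rw [hf, eval_harqPolynomial hM, mul_add, mul_add, mul_sum]
    simp only [mul_left_comm, mul_assoc, sub_sub, add_assoc]
  have hroot : ∀ᶠ θ in atTop, χstar θ ^ M = exp (-θ * n) * (harqPolynomial p M).eval (χstar θ) :=
    hχstar.mono fun θ hθ ↦ sub_eq_zero.mp ((hfq θ _).symm.trans hθ.2)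
  have hexp : Tendsto (fun θ : ℝ ↦ exp (-θ * n)) atTop (nhdsWithin 0 {0}ᶜ) :=
    (tendsto_exp_atBot_nhdsGT.mono_right (nhdsWithin_mono _ fun _ h ↦ ne_of_gt h)).comp
      (tendsto_neg_atTop_atBot.atBot_mul_const hn)
  have hlim := (tendsto_log_norm_div_log_norm_of_pow_eq_mul_eval (by omega)
    ((natDegree_harqPolynomial_le p M).trans (Nat.sub_le M 1))
    ((coeff_zero_harqPolynomial p M).trans_ne hp) hexp hroot).const_mul (n / T)
  rw [div_mul_div_comm, mul_one] at hlim
  refine hlim.congr fun θ ↦ ?_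
  simp only [norm_eq_abs, log_abs, log_exp]
  field_simp

/-- As the QoS exponent `θ → ∞`, the effective capacity
`ρ_S(θ) = -(1/(θT)) log χ*(θ)` tends to the minimum rate `n/(TM)`. -/
theorem stmt16
    (M : ℕ) (hM : 2 ≤ M) (p : ℕ → ℝ)
    (hp : ∀ m, m ≤ M - 1 → p m ∈ Set.Ioo (0 : ℝ) 1)
    (n T : ℝ) (hn : 0 < n) (hT : 0 < T)
    (f : ℝ → ℝ → ℝ)
    (hf : ∀ θ χ : ℝ,
      f θ χ = χ ^ M - (1 - p 0) * Real.exp (-θ * n) * χ ^ (M - 1) -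
        (∑ m ∈ Finset.Icc 1 (M - 2),
          (1 - p m) * Real.exp (-θ * n) * (∏ j ∈ Finset.range m, p j) * χ ^ (M - 1 - m)) -
        Real.exp (-θ * n) * ∏ j ∈ Finset.range M, p j)
    (χstar : ℝ → ℝ)
    (hχstar : ∀ θ : ℝ, 0 < θ →
      0 < χstar θ ∧ f θ (χstar θ) = 0 ∧ ∀ χ : ℝ, 0 < χ → f θ χ = 0 → χ = χstar θ) :
    Tendsto (fun θ : ℝ => -(1 / (θ * T)) * Real.log (χstar θ)) atTop
      (nhds (n / (T * M))) := by
  refine stmt16_general M hM p (prod_pos fun j hj ↦ (hp j ?_).1).ne' n T hn hT.ne' f hf χstar ?_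
  · exact Nat.le_sub_one_of_lt (mem_range.mp hj)
  · filter_upwards [eventually_gt_atTop 0] with θ hθ using ⟨(hχstar θ hθ).1, (hχstar θ hθ).2.1⟩
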